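/- Let k be a field, R a commutative unital k-algebra, σ : R → R an essential unital k-algebra endomorphism, and t ∈ R. Let A be a unital k-algebra equipped with a unital k-algebra homomorphism φ : R → A and elements X, Y ∈ A satisfying the weak generalized Weyl algebra relations, and assume A is generated as a k-algebra by φ(R) ∪ {X, Y}. Then every simple A-module M that is finite-dimensional over k is a weight module, i.e., M is the internal direct sum of its weight spaces M_m over all maximal ideals m of R. -/

import Mathlib

variable {R A M : Type*}

/-- Weight space of an `A`-module `M` (viewed as `R`-module via `φ`) at an ideal `m`:
`M_m = {v ∈ M : r • v = 0 for all r ∈ m}`. -/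
def weightSpace [CommRing R] [Ring A] [AddCommGroup M] [Module A M]
    (φ : R →+* A) (m : Ideal R) : AddSubgroup M where
  carrier := {v | ∀ r ∈ m, φ r • v = 0}
  zero_mem' := fun r _ => smul_zero (φ r)
  add_mem' := by
    intro a b ha hb r hr
    rw [smul_add, ha r hr, hb r hr, add_zero]
  neg_mem' := by
    intro a ha r hr
    rw [smul_neg, ha r hr, neg_zero]

/-- `M` is a weight module: it is the internal direct sum of its weight spaces
over all maximal ideals of `R`. -/
def IsWeightModule [CommRing R] [Ring A] [AddCommGroup M] [Module A M]
    (φ : R →+* A) : Prop :=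
  (⨆ m : {m : Ideal R // m.IsMaximal}, weightSpace (M := M) φ m.1) = ⊤ ∧
  iSupIndep (fun m : {m : Ideal R // m.IsMaximal} => weightSpace (M := M) φ m.1)

/-- `σ` is an essential endomorphism: for every maximal ideal `m` the map
`r ↦ σ(r) + m` from `R` to `R/m` is surjective. -/
def IsEssential [CommRing R] (σ : R →+* R) : Prop :=
  ∀ m : Ideal R, m.IsMaximal →
    Function.Surjective (fun r : R => Ideal.Quotient.mk m (σ r))

theorem aux_exists_weight (k : Type*) [Field k]
    [CommRing R] [Algebra k R] [Ring A] [Algebra k A]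
    [AddCommGroup M] [Module A M] [Module k M] [IsScalarTower k A M]
    (φ : R →ₐ[k] A) [FiniteDimensional k M] (P : AddSubgroup M)
    (hP : ∀ r : R, ∀ v ∈ P, φ r • v ∈ P) (hne : ∃ v ∈ P, v ≠ 0) :
    ∃ m : Ideal R, m.IsMaximal ∧ ∃ v ∈ P, v ≠ 0 ∧ v ∈ weightSpace (M := M) φ.toRingHom m := by
  let : Module R M := Module.compHom M φ.toRingHom
  have hsm : ∀ (r : R) (v : M), r • v = φ r • v := fun r v => rfl
  have : IsScalarTower k R M := ⟨fun c r v => by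
    rw [hsm, hsm, map_smul, smul_assoc]⟩
  have : IsArtinian R M := isArtinian_of_tower k inferInstance
  let Q : Submodule R M := { P with smul_mem' := fun r v hv => hP r v hv }
  have hQ : Q ≠ ⊥ := by
    obtain ⟨v, hv, h0⟩ := hne
    intro h
    have : v ∈ Q := hv
    rw [h] at this
    exact h0 (by simpa using this)
  obtain ⟨S, hS, hSQ⟩ := (eq_bot_or_exists_atom_le Q).resolve_left hQ
  have : IsSimpleModule R S := isSimpleModule_iff_isAtom.mpr hS
  obtain ⟨v, hv, h0⟩ := (Submodule.ne_bot_iff S).mp hS.1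
  have hv0 : (⟨v, hv⟩ : S) ≠ 0 := fun h => h0 (congrArg Subtype.val h)
  refine ⟨_, IsSimpleModule.ker_toSpanSingleton_isMaximal R hv0, v, hSQ hv, h0, ?_⟩
  intro r hr
  have := LinearMap.mem_ker.mp hr
  exact congrArg Subtype.val this

theorem aux_top (k : Type*) [Field k]
    [CommRing R] [Algebra k R] [Ring A] [Algebra k A]
    [AddCommGroup M] [Module A M]
    (φ : R →ₐ[k] A) (X Y : A)
    (hgen : Algebra.adjoin k (Set.range (φ : R → A) ∪ {X, Y}) = ⊤)
    (hsimple : IsSimpleModule A M) (S : AddSubgroup M)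
    (hR : ∀ r : R, ∀ v ∈ S, φ r • v ∈ S) (hX : ∀ v ∈ S, X • v ∈ S)
    (hY : ∀ v ∈ S, Y • v ∈ S) (hne : ∃ v ∈ S, v ≠ 0) : S = ⊤ := by
  have key : ∀ a : A, ∀ v ∈ S, a • v ∈ S := by
    intro a
    have ha : a ∈ Algebra.adjoin k (Set.range (φ : R → A) ∪ {X, Y}) := by rw [hgen]; trivial
    induction ha using Algebra.adjoin_induction with
    | mem x hx =>
      rcases hx with ⟨r, rfl⟩ | rfl | rfl
      · exact hR r
      · exact hX
      · exact hY
    | algebraMap c =>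
      rw [← AlgHom.commutes φ c]
      exact hR _
    | add x y _ _ hx hy =>
      intro v hv
      rw [add_smul]
      exact S.add_mem (hx v hv) (hy v hv)
    | mul x y _ _ hx hy =>
      intro v hv
      rw [mul_smul]
      exact hx _ (hy v hv)
  let Q : Submodule A M := { S with smul_mem' := fun a v hv => key a v hv }
  obtain ⟨v, hv, h0⟩ := hne
  rcases eq_bot_or_eq_top Q with h | h
  · have : v ∈ Q := hv
    rw [h] at this
    exact absurd (by simpa using this) h0
  · rw [eq_top_iff]
    intro x _
    have : x ∈ Q := by rw [h]; trivial
    exact this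

theorem aux_indep [CommRing R] [Ring A] [AddCommGroup M] [Module A M] (φ : R →+* A) :
    iSupIndep (fun m : {m : Ideal R // m.IsMaximal} => weightSpace (M := M) φ m.1) := by
  intro m
  rw [AddSubgroup.disjoint_def]
  intro x hx hx'
  have hp : m.1.IsPrime := m.2.isPrime
  have : ∃ r, r ∉ m.1 ∧ φ r • x = 0 := by
    have hle : (⨆ j, ⨆ (_ : j ≠ m), weightSpace (M := M) φ j.1) ≤
        ({ carrier := {x | ∃ r, r ∉ m.1 ∧ φ r • x = 0}
           zero_mem' := ⟨1, hp.one_notMem, smul_zero _⟩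
           add_mem' := by
            rintro a b ⟨r, hr, ha⟩ ⟨s, hs, hb⟩
            refine ⟨r * s, fun h => (hp.mem_or_mem h).elim hr hs, ?_⟩
            rw [smul_add]
            nth_rw 1 [mul_comm]
            rw [map_mul, map_mul, mul_smul, mul_smul, ha, hb, smul_zero, smul_zero, add_zero]
           neg_mem' := by
            rintro a ⟨r, hr, ha⟩
            exact ⟨r, hr, by rw [smul_neg, ha, neg_zero]⟩ } : AddSubgroup M) := by
      refine iSup_le fun j => iSup_le fun hj => ?_
      intro v hv
      have : ¬ j.1 ≤ m.1 := fun h => hj (Subtype.ext (j.2.eq_of_le m.2.ne_top h))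
      obtain ⟨r, hr, hrm⟩ := Set.not_subset.mp this
      exact ⟨r, hrm, hv r hr⟩
    exact hle hx'
  obtain ⟨r, hr, h0⟩ := this
  obtain ⟨s, hs⟩ := m.2.exists_inv hr
  obtain ⟨i, hi, h1⟩ := hs
  have h2 := congrArg (fun z => φ z • x) h1
  simp only [map_add, map_mul, map_one, add_smul, mul_smul, one_smul, h0, smul_zero, hx i hi,
    zero_add] at h2
  exact h2.symm

theorem aux_comap_max [CommRing R] (σ : R →+* R) (hess : IsEssential σ) (m : Ideal R)
    (hm : m.IsMaximal) : (m.comap σ).IsMaximal := by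
  let := Ideal.Quotient.field m
  have h := RingHom.ker_isMaximal_of_surjective ((Ideal.Quotient.mk m).comp σ) (hess m hm)
  rwa [← RingHom.comap_ker, Ideal.mk_ker] at h

theorem stmt_17 (k : Type*) [Field k]
    [CommRing R] [Algebra k R] [Ring A] [Algebra k A]
    [AddCommGroup M] [Module A M] [Module k M] [IsScalarTower k A M]
    (σ : R →ₐ[k] R) (t : R) (φ : R →ₐ[k] A) (X Y : A)
    (hess : IsEssential σ.toRingHom)
    (hYX : Y * X = φ t) (hXY : X * Y = φ (σ t))
    (hXr : ∀ r : R, X * φ r = φ (σ r) * X)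
    (hrY : ∀ r : R, φ r * Y = Y * φ (σ r))
    (hgen : Algebra.adjoin k (Set.range (φ : R → A) ∪ {X, Y}) = ⊤)
    (hsimple : IsSimpleModule A M)
    (hfd : FiniteDimensional k M) :
    IsWeightModule (M := M) φ.toRingHom := by
  refine ⟨?_, aux_indep _⟩
  set W : AddSubgroup M :=
    ⨆ m : {m : Ideal R // m.IsMaximal}, weightSpace (M := M) φ.toRingHom m.1 with hW
  have hmemW : ∀ (m : Ideal R), m.IsMaximal → ∀ v, v ∈ weightSpace (M := M) φ.toRingHom m →
      v ∈ W := fun m hm v hv =>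
    (le_iSup (fun m : {m : Ideal R // m.IsMaximal} => weightSpace (M := M) φ.toRingHom m.1)
      ⟨m, hm⟩) hv
  have hYw : ∀ (m : Ideal R) (v : M), v ∈ weightSpace (M := M) φ.toRingHom m →
      Y • v ∈ weightSpace (M := M) φ.toRingHom (m.comap σ.toRingHom) := by
    intro m v hv r hr
    change φ r • Y • v = 0
    rw [← mul_smul, hrY, mul_smul]
    have : φ (σ r) • v = 0 := hv _ hr
    rw [this, smul_zero]
  have hRw : ∀ (m : Ideal R) (r : R) (v : M), v ∈ weightSpace (M := M) φ.toRingHom m →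
      φ r • v ∈ weightSpace (M := M) φ.toRingHom m := by
    intro m r v hv s hs
    change φ s • φ r • v = 0
    rw [← mul_smul, ← map_mul, mul_comm, map_mul, mul_smul]
    have : φ s • v = 0 := hv _ hs
    rw [this, smul_zero]
  -- additive maps sending weight vectors into W preserve W
  have hstab : ∀ f : M →+ M, (∀ m : Ideal R, m.IsMaximal → ∀ v,
      v ∈ weightSpace (M := M) φ.toRingHom m → f v ∈ W) → ∀ v ∈ W, f v ∈ W := by
    intro f hf v hv
    have : W ≤ W.comap f := iSup_le fun m => fun v hv => hf m.1 m.2 v hv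
    exact this hv
  have hWR : ∀ r : R, ∀ v ∈ W, φ r • v ∈ W := fun r =>
    hstab (DistribSMul.toAddMonoidHom M (φ r)) fun m hm v hv => hmemW m hm _ (hRw m r v hv)
  have hWY : ∀ v ∈ W, Y • v ∈ W :=
    hstab (DistribSMul.toAddMonoidHom M Y) fun m hm v hv =>
      hmemW _ (aux_comap_max _ hess m hm) _ (hYw m v hv)
  have hnt : Nontrivial M := IsSimpleModule.nontrivial A M
  by_cases hinj : ∀ v : M, X • v = 0 → v = 0
  · -- X bijective
    have hk : ∀ (c : k) (v : M), c • v = φ (algebraMap k R c) • v := by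
      intro c v
      rw [AlgHom.commutes, algebraMap_smul]
    let f : M →ₗ[k] M :=
      { toFun := fun v => X • v
        map_add' := fun a b => smul_add _ _ _
        map_smul' := fun c v => by
          simp only [RingHom.id_apply, hk]
          rw [← mul_smul, hXr, mul_smul, AlgHom.commutes] }
    have hfi : Function.Injective f := by
      rw [injective_iff_map_eq_zero]
      exact hinj
    let e : M ≃ₗ[k] M := LinearEquiv.ofInjectiveEndo f hfi
    have he : ∀ v, X • e.symm v = v := fun v => e.apply_symm_apply v
    have hsymm : ∀ v ∈ W, e.symm v ∈ W := by
      refine hstab e.symm.toLinearMap.toAddMonoidHom ?_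
      intro m hm v hv
      refine hmemW _ (aux_comap_max _ hess m hm) _ ?_
      intro r hr
      apply hinj
      change X • φ r • e.symm v = 0
      rw [← mul_smul, hXr, mul_smul, he]
      exact hv _ hr
    let Wk : Submodule k M :=
      { W with smul_mem' := fun c v hv => (hk c v).symm ▸ hWR _ v hv }
    have hle : Wk.map e.symm.toLinearMap ≤ Wk := by
      rintro _ ⟨v, hv, rfl⟩
      exact hsymm v hv
    have heq : Wk.map e.symm.toLinearMap = Wk :=
      Submodule.eq_of_le_of_finrank_eq hle (LinearEquiv.finrank_map_eq e.symm Wk)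
    have hWX : ∀ v ∈ W, X • v ∈ W := by
      intro v hv
      have : v ∈ Wk.map e.symm.toLinearMap := by rw [heq]; exact hv
      obtain ⟨w, hw, rfl⟩ := this
      change X • e.symm w ∈ W
      rw [he]
      exact hw
    obtain ⟨v0, hv0⟩ := exists_ne (0 : M)
    obtain ⟨m, hm, v, -, hv, hvm⟩ := aux_exists_weight k φ (⊤ : AddSubgroup M)
      (fun _ _ _ => trivial) ⟨v0, trivial, hv0⟩
    exact aux_top k φ X Y hgen hsimple W hWR hWX hWY ⟨v, hmemW m hm v hvm, hv⟩
  · push Not at hinj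
    obtain ⟨v0, hv0, hv0'⟩ := hinj
    obtain ⟨m, hm, v, hXv, hv, hvm⟩ := aux_exists_weight k φ
      (DistribSMul.toAddMonoidHom M X).ker
      (fun r v hv => by
        have hv' : X • v = 0 := hv
        change X • φ r • v = 0
        rw [← mul_smul, hXr, mul_smul, hv', smul_zero]) ⟨v0, hv0, hv0'⟩
    let T : Set M := {w | ∃ (i : ℕ) (u : M), X • u = 0 ∧
      u ∈ weightSpace (M := M) φ.toRingHom m ∧ w = Y ^ i • u}
    have hTR : ∀ w ∈ T, ∀ r : R, φ r • w ∈ T := by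
      rintro w ⟨i, u, hu, hum, rfl⟩ r
      refine ⟨i, φ (σ^[i] r) • u, ?_, hRw m _ u hum, ?_⟩
      · rw [← mul_smul, hXr, mul_smul, hu, smul_zero]
      · rw [← mul_smul, ← mul_smul]
        congr 1
        induction i generalizing r with
        | zero => simp
        | succ n ih =>
          rw [pow_succ', ← mul_assoc, hrY, mul_assoc, ih, mul_assoc, Function.iterate_succ_apply]
    have hTX : ∀ w ∈ T, X • w ∈ AddSubgroup.closure T := by
      rintro w ⟨i, u, hu, hum, rfl⟩
      cases i with
      | zero => simp [hu, AddSubgroup.zero_mem]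
      | succ n =>
        rw [pow_succ', ← mul_smul, ← mul_assoc, hXY, mul_smul]
        exact AddSubgroup.subset_closure (hTR _ ⟨n, u, hu, hum, rfl⟩ _)
    have hTY : ∀ w ∈ T, Y • w ∈ T := by
      rintro w ⟨i, u, hu, hum, rfl⟩
      exact ⟨i + 1, u, hu, hum, by rw [pow_succ', mul_smul]⟩
    have hTW : ∀ w ∈ T, w ∈ W := by
      rintro w ⟨i, u, hu, hum, rfl⟩
      have : u ∈ W := hmemW m hm u hum
      clear hum
      induction i with
      | zero => simpa using this
      | succ n ih =>
        rw [pow_succ', mul_smul]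
        exact hWY _ ih
    have hcl : ∀ a : A, (∀ w ∈ T, a • w ∈ AddSubgroup.closure T) →
        ∀ w ∈ AddSubgroup.closure T, a • w ∈ AddSubgroup.closure T := by
      intro a ha w hw
      have : AddSubgroup.closure T ≤
          (AddSubgroup.closure T).comap (DistribSMul.toAddMonoidHom M a) :=
        (AddSubgroup.closure_le _).mpr ha
      exact this hw
    have htop := aux_top k φ X Y hgen hsimple (AddSubgroup.closure T)
      (fun r => hcl _ fun w hw => AddSubgroup.subset_closure (hTR w hw r))
      (hcl _ hTX) (hcl _ fun w hw => AddSubgroup.subset_closure (hTY w hw))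
      ⟨v, AddSubgroup.subset_closure ⟨0, v, hXv, hvm, by simp⟩, hv⟩
    rw [eq_top_iff, ← htop]
    exact (AddSubgroup.closure_le _).mpr hTW
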